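/- Let q be a Borel probability measure on SL(2,ℝ) with ∫ log‖α‖ dq(α) < ∞. Suppose that every matrix α in the support of q maps the pair of coordinate axes {ℝ·(1,0), ℝ·(0,1)} into itself (i.e. each α in the support either preserves both coordinate axes or swaps them), and suppose q is irreducible, meaning there is no 1-dimensional subspace L ⊂ ℝ² with α(L) = L for every α in the support of q. Then λ₊(q) = 0. -/

import Mathlib

open MeasureTheory Filter Topology Matrix
open scoped ENNReal

noncomputable section

abbrev SL2 : Type := Matrix.SpecialLinearGroup (Fin 2) ℝ

/-- Topology on `SL(2,ℝ)` induced from the (finite-dimensional) space of matrices. -/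
instance : TopologicalSpace SL2 :=
  TopologicalSpace.induced (fun α : SL2 => (α : Matrix (Fin 2) (Fin 2) ℝ)) inferInstance

/-- Borel σ-algebra on `SL(2,ℝ)`. -/
instance : MeasurableSpace SL2 := borel SL2

/-- The ℓ² operator norm of a 2×2 real matrix. -/
noncomputable def opNorm (A : Matrix (Fin 2) (Fin 2) ℝ) : ℝ :=
  ‖LinearMap.toContinuousLinearMap (Matrix.toEuclideanLin A)‖

/-- Distance on `SL(2,ℝ)` induced by the operator norm. -/
noncomputable def dSL (α β : SL2) : ℝ :=
  opNorm ((α : Matrix (Fin 2) (Fin 2) ℝ) - (β : Matrix (Fin 2) (Fin 2) ℝ))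

/-- The sequence `n ↦ (1/n) ∫ log (nrm (B(β_{n-1}) ⋯ B(β_1) B(β_0))) dqⁿ`. -/
noncomputable def lyapSeq {X G : Type*} [MeasurableSpace X] [Monoid G]
    (B : X → G) (nrm : G → ℝ) (q : Measure X) [SigmaFinite q] : ℕ → ℝ := fun n =>
  (n : ℝ)⁻¹ * ∫ ω : Fin n → X,
    Real.log (nrm ((List.ofFn fun i => B (ω i)).reverse.prod)) ∂(Measure.pi fun _ => q)

/-- Top Lyapunov exponent of the i.i.d. cocycle generated by `B` with distribution `q`,
`λ₊(B,q) = lim_n (1/n) ∫ log (nrm (B(β_{n-1}) ⋯ B(β_0))) dqⁿ`. -/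
noncomputable def lyapCocycle {X G : Type*} [MeasurableSpace X] [Monoid G]
    (B : X → G) (nrm : G → ℝ) (q : Measure X) [SigmaFinite q] : ℝ :=
  limUnder atTop (lyapSeq B nrm q)

/-- Top Lyapunov exponent of i.i.d. products of matrices in `SL(2,ℝ)`. -/
noncomputable def lyapPlus (p : Measure SL2) [SigmaFinite p] : ℝ :=
  lyapCocycle id (fun α : SL2 => opNorm (α : Matrix (Fin 2) (Fin 2) ℝ)) p

/-- Bottom Lyapunov exponent of i.i.d. products of matrices in `SL(2,ℝ)`:
`λ₋(p) = lim_n (1/n) ∫ log (‖(α_{n-1}⋯α₀)⁻¹‖⁻¹) dpⁿ`. -/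
noncomputable def lyapMinus (p : Measure SL2) [SigmaFinite p] : ℝ :=
  lyapCocycle id (fun α : SL2 => (opNorm ((α⁻¹ : SL2) : Matrix (Fin 2) (Fin 2) ℝ))⁻¹) p

/-- Wasserstein-1 distance of two measures, with respect to a distance function `d`:
the infimum over all couplings `π` of `μ` and `ν` of `∫ d(x,y) dπ`. -/
noncomputable def W1 {M : Type*} [MeasurableSpace M] (d : M → M → ℝ) (μ ν : Measure M) : ℝ≥0∞ :=
  ⨅ (π : Measure (M × M)) (_ : π.map Prod.fst = μ) (_ : π.map Prod.snd = ν),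
    ∫⁻ x, ENNReal.ofReal (d x.1 x.2) ∂π


/-- The (topological) support of a measure: points all of whose open neighbourhoods
have positive measure. -/
def msupport (q : Measure SL2) : Set SL2 :=
  {α : SL2 | ∀ U : Set SL2, IsOpen U → α ∈ U → q U ≠ 0}

/-- The horizontal axis `ℝ·(1,0)` in `ℝ²`. -/
def Hax : Submodule ℝ (Fin 2 → ℝ) := Submodule.span ℝ {![1, 0]}

/-- The vertical axis `ℝ·(0,1)` in `ℝ²`. -/
def Vax : Submodule ℝ (Fin 2 → ℝ) := Submodule.span ℝ {![0, 1]}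

/-- The image of a subspace `L ⊆ ℝ²` under a matrix `α ∈ SL(2,ℝ)`. -/
noncomputable def mapLine (α : SL2) (L : Submodule ℝ (Fin 2 → ℝ)) : Submodule ℝ (Fin 2 → ℝ) :=
  Submodule.map (Matrix.toLin' (α : Matrix (Fin 2) (Fin 2) ℝ)) L

/-!
A matrix permuting the axes is `!![x, 0; 0, x⁻¹]` or `!![0, -x⁻¹; x, 0]`; put `a = log |x|`, and let
`s` be `1` in the first case and `-1` in the second. The logarithm of the norm is `|a|`, and since a
swap exchanges the stretched and the contracted axis, the logarithm of the norm of
`α_{n-1} ⋯ α_0` is the absolute value of the signed sum `∑ k < n, s(α_0) ⋯ s(α_{k-1}) a(α_k)`.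
Irreducibility makes swaps occur with positive probability, that is, `∫ s ≠ 1`. The signed sum of
the coboundary `c (s - 1)` telescopes to a bounded quantity, and a suitable `c` makes
`a + c (s - 1)` centred; the signed sum is then a martingale transform of centred i.i.d. integrable
variables, which is `o(n)` in `L¹`.
-/

open ProbabilityTheory

section MartingaleTransform

variable {Ω : Type*} {mΩ : MeasurableSpace Ω} {μ : Measure Ω} {ℱ : Filtration ℕ mΩ}
  {H ξ η : ℕ → Ω → ℝ}

/-- The discrete stochastic integral of `H` against the increments `ξ`, used to treat the signed
sums of the theorem. The increment `ξ k` is the one from time `k` to time `k + 1`, so `H` is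
predictable when `H k` is `ℱ k`-measurable. -/
def martingaleTransform (H ξ : ℕ → Ω → ℝ) (n : ℕ) (ω : Ω) : ℝ :=
  ∑ k ∈ Finset.range n, H k ω * ξ k ω

theorem martingaleTransform_succ (n : ℕ) (ω : Ω) :
    martingaleTransform H ξ (n + 1) ω = martingaleTransform H ξ n ω + H n ω * ξ n ω :=
  Finset.sum_range_succ _ _

theorem martingaleTransform_add (n : ℕ) (ω : Ω) :
    martingaleTransform H (ξ + η) n ω =
      martingaleTransform H ξ n ω + martingaleTransform H η n ω := by
  simp only [martingaleTransform, Pi.add_apply, mul_add, Finset.sum_add_distrib]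

theorem measurable_martingaleTransform (hH : ∀ k, Measurable[ℱ k] (H k))
    (hξ : ∀ k, Measurable[ℱ (k + 1)] (ξ k)) (n : ℕ) :
    Measurable[ℱ n] (martingaleTransform H ξ n) := by
  refine Finset.measurable_sum _ fun k hk => ?_
  have hkn : k + 1 ≤ n := Finset.mem_range.1 hk
  exact ((hH k).mono (ℱ.mono (k.le_succ.trans hkn)) le_rfl).mul
    ((hξ k).mono (ℱ.mono hkn) le_rfl)

theorem memLp_martingaleTransform {p : ℝ≥0∞} (hH : ∀ k, Measurable (H k))
    (hH_le : ∀ k ω, |H k ω| ≤ 1) (hξ : ∀ k, MemLp (ξ k) p μ) (n : ℕ) :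
    MemLp (martingaleTransform H ξ n) p μ := by
  refine memLp_finsetSum _ fun k _ => ?_
  refine (hξ k).mono ((hH k).aestronglyMeasurable.mul (hξ k).aestronglyMeasurable)
    (Eventually.of_forall fun ω => ?_)
  rw [norm_mul]
  exact mul_le_of_le_one_left (norm_nonneg _) (hH_le k ω)

theorem integrable_martingaleTransform (hH : ∀ k, Measurable (H k))
    (hH_le : ∀ k ω, |H k ω| ≤ 1) (hξ : ∀ k, Integrable (ξ k) μ) (n : ℕ) :
    Integrable (martingaleTransform H ξ n) μ :=
  memLp_one_iff_integrable.1
    (memLp_martingaleTransform hH hH_le (fun k => memLp_one_iff_integrable.2 (hξ k)) n)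

theorem abs_martingaleTransform_le (hH_le : ∀ k ω, |H k ω| ≤ 1) (n : ℕ) (ω : Ω) :
    |martingaleTransform H ξ n ω| ≤ ∑ k ∈ Finset.range n, |ξ k ω| := by
  refine (Finset.abs_sum_le_sum_abs _ _).trans (Finset.sum_le_sum fun k _ => ?_)
  rw [abs_mul]
  exact mul_le_of_le_one_left (abs_nonneg _) (hH_le k ω)

theorem integral_abs_martingaleTransform_le {C : ℝ} (hH_le : ∀ k ω, |H k ω| ≤ 1)
    (hξ : ∀ k, Integrable (ξ k) μ) (hC : ∀ k, ∫ ω, |ξ k ω| ∂μ ≤ C) (n : ℕ) :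
    ∫ ω, |martingaleTransform H ξ n ω| ∂μ ≤ n * C := by
  calc ∫ ω, |martingaleTransform H ξ n ω| ∂μ
      ≤ ∫ ω, ∑ k ∈ Finset.range n, |ξ k ω| ∂μ :=
        integral_mono_of_nonneg (Eventually.of_forall fun _ => abs_nonneg _)
          (integrable_finsetSum _ fun k _ => (hξ k).abs)
          (Eventually.of_forall (abs_martingaleTransform_le hH_le n))
    _ = ∑ k ∈ Finset.range n, ∫ ω, |ξ k ω| ∂μ :=
        integral_finsetSum _ fun k _ => (hξ k).abs
    _ ≤ ∑ _k ∈ Finset.range n, C := Finset.sum_le_sum fun k _ => hC k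
    _ = n * C := by rw [Finset.sum_const, Finset.card_range, nsmul_eq_mul]

theorem integral_abs_martingaleTransform_add_le (hH : ∀ k, Measurable (H k))
    (hH_le : ∀ k ω, |H k ω| ≤ 1) (hξ : ∀ k, Integrable (ξ k) μ) (hη : ∀ k, Integrable (η k) μ)
    (n : ℕ) :
    ∫ ω, |martingaleTransform H (ξ + η) n ω| ∂μ ≤
      ∫ ω, |martingaleTransform H ξ n ω| ∂μ + ∫ ω, |martingaleTransform H η n ω| ∂μ := by
  have hMξ := (integrable_martingaleTransform hH hH_le hξ n).abs
  have hMη := (integrable_martingaleTransform hH hH_le hη n).abs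
  rw [← integral_add hMξ hMη]
  refine integral_mono_of_nonneg (Eventually.of_forall fun _ => abs_nonneg _) (hMξ.add hMη)
    (Eventually.of_forall fun ω => ?_)
  simpa only [martingaleTransform_add] using abs_add_le _ _

theorem integral_mul_eq_zero_of_indep {m : MeasurableSpace Ω} {X Y : Ω → ℝ} (hm : m ≤ mΩ)
    (hX : Measurable[m] X) (hY : Measurable[mΩ] Y)
    (hindep : Indep (MeasurableSpace.comap Y inferInstance) m μ) (hmean : ∫ ω, Y ω ∂μ = 0) :
    ∫ ω, X ω * Y ω ∂μ = 0 := by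
  have hXY : IndepFun X Y μ :=
    (IndepFun_iff_Indep _ _ _).2 (indep_of_indep_of_le_right hindep hX.comap_le).symm
  have hmul := hXY.integral_mul_eq_mul_integral
    (hX.mono hm le_rfl).aestronglyMeasurable hY.aestronglyMeasurable
  rw [hmean, mul_zero] at hmul
  exact hmul

theorem integral_sq_martingaleTransform_le {V : ℝ} (hH : ∀ k, Measurable[ℱ k] (H k))
    (hH_le : ∀ k ω, |H k ω| ≤ 1) (hξ : ∀ k, Measurable[ℱ (k + 1)] (ξ k))
    (hξ_L2 : ∀ k, MemLp (ξ k) 2 μ)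
    (hindep : ∀ k, Indep (MeasurableSpace.comap (ξ k) inferInstance) (ℱ k) μ)
    (hmean : ∀ k, ∫ ω, ξ k ω ∂μ = 0) (hV : ∀ k, ∫ ω, ξ k ω ^ 2 ∂μ ≤ V) (n : ℕ) :
    ∫ ω, martingaleTransform H ξ n ω ^ 2 ∂μ ≤ n * V := by
  induction n with
  | zero => simp [martingaleTransform]
  | succ n ih =>
    have hHm : ∀ k, Measurable (H k) := fun k => (hH k).mono (ℱ.le k) le_rfl
    have hξm : Measurable (ξ n) := (hξ n).mono (ℱ.le _) le_rfl
    set M := martingaleTransform H ξ n with hM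
    have hM_L2 : MemLp M 2 μ := memLp_martingaleTransform hHm hH_le hξ_L2 n
    have hMH : Measurable[ℱ n] fun ω => 2 * (M ω * H n ω) :=
      ((measurable_martingaleTransform hH hξ n).mul (hH n)).const_mul 2
    have hcross : ∫ ω, 2 * (M ω * H n ω) * ξ n ω ∂μ = 0 :=
      integral_mul_eq_zero_of_indep (ℱ.le n) hMH hξm (hindep n) (hmean n)
    have hcross_int : Integrable (fun ω => 2 * (M ω * H n ω) * ξ n ω) μ := by
      refine (((hM_L2.integrable_mul (hξ_L2 n)).bdd_mul (hHm n).aestronglyMeasurable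
        (Eventually.of_forall (hH_le n))).const_mul 2).congr (Eventually.of_forall fun ω => ?_)
      simp only [Pi.mul_apply]
      ring
    have hsum_int : Integrable (fun ω => M ω ^ 2 + 2 * (M ω * H n ω) * ξ n ω) μ :=
      hM_L2.integrable_sq.add hcross_int
    calc ∫ ω, martingaleTransform H ξ (n + 1) ω ^ 2 ∂μ
        ≤ ∫ ω, (M ω ^ 2 + 2 * (M ω * H n ω) * ξ n ω + ξ n ω ^ 2) ∂μ := by
          refine integral_mono_of_nonneg (Eventually.of_forall fun _ => sq_nonneg _)
            (hsum_int.add (hξ_L2 n).integrable_sq)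
            (Eventually.of_forall fun ω => ?_)
          have hH_sq : H n ω ^ 2 * ξ n ω ^ 2 ≤ ξ n ω ^ 2 :=
            mul_le_of_le_one_left (sq_nonneg _) ((sq_le_one_iff_abs_le_one _).2 (hH_le n ω))
          simp only [martingaleTransform_succ, ← hM]
          linarith
      _ = ∫ ω, M ω ^ 2 ∂μ + ∫ ω, ξ n ω ^ 2 ∂μ := by
          rw [integral_add hsum_int (hξ_L2 n).integrable_sq,
            integral_add hM_L2.integrable_sq hcross_int, hcross, add_zero]
      _ ≤ (n + 1 : ℕ) * V := by
          push_cast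
          linarith [hV n]

variable [IsProbabilityMeasure μ]

theorem integral_abs_le_sqrt_integral_sq {X : Ω → ℝ} (hX : MemLp X 2 μ) :
    ∫ ω, |X ω| ∂μ ≤ √(∫ ω, X ω ^ 2 ∂μ) := by
  have hvar := variance_nonneg |X| μ
  rw [variance_eq_sub hX.abs] at hvar
  simp only [Pi.pow_apply, Pi.abs_apply, sq_abs, sub_nonneg] at hvar
  exact Real.le_sqrt_of_sq_le hvar

theorem tendsto_integral_abs_martingaleTransform_of_memLp_two {V : ℝ}
    (hH : ∀ k, Measurable[ℱ k] (H k)) (hH_le : ∀ k ω, |H k ω| ≤ 1)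
    (hξ : ∀ k, Measurable[ℱ (k + 1)] (ξ k)) (hξ_L2 : ∀ k, MemLp (ξ k) 2 μ)
    (hindep : ∀ k, Indep (MeasurableSpace.comap (ξ k) inferInstance) (ℱ k) μ)
    (hmean : ∀ k, ∫ ω, ξ k ω ∂μ = 0) (hV : ∀ k, ∫ ω, ξ k ω ^ 2 ∂μ ≤ V) :
    Tendsto (fun n : ℕ => (n : ℝ)⁻¹ * ∫ ω, |martingaleTransform H ξ n ω| ∂μ) atTop (𝓝 0) := by
  have hbound : ∀ n : ℕ,
      (n : ℝ)⁻¹ * ∫ ω, |martingaleTransform H ξ n ω| ∂μ ≤ √((n : ℝ)⁻¹ * V) := fun n => by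
    have hL2 := memLp_martingaleTransform (fun k => (hH k).mono (ℱ.le k) le_rfl) hH_le hξ_L2 n
    calc (n : ℝ)⁻¹ * ∫ ω, |martingaleTransform H ξ n ω| ∂μ
        ≤ (n : ℝ)⁻¹ * √(n * V) := by
          gcongr
          exact (integral_abs_le_sqrt_integral_sq hL2).trans (Real.sqrt_le_sqrt
            (integral_sq_martingaleTransform_le hH hH_le hξ hξ_L2 hindep hmean hV n))
      _ = √((n : ℝ)⁻¹ * V) := by
          rw [← Real.sqrt_sq (inv_nonneg.2 n.cast_nonneg : (0 : ℝ) ≤ (n : ℝ)⁻¹),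
            ← Real.sqrt_mul (sq_nonneg _), Real.sqrt_sq (by positivity)]
          congr 1
          rcases eq_or_ne (n : ℝ) 0 with hn | hn
          · simp [hn]
          · field_simp
  refine squeeze_zero (fun n => by positivity) hbound ?_
  simpa using ((tendsto_inv_atTop_nhds_zero_nat (𝕜 := ℝ)).mul_const V).sqrt

theorem exists_boundedContinuous_comp_integral_eq_zero {X : Ω → ℝ} (hX : Integrable X μ)
    (hmean : ∫ ω, X ω ∂μ = 0) {ε : ℝ} (hε : 0 < ε) :
    ∃ g : BoundedContinuousFunction ℝ ℝ,
      ∫ ω, g (X ω) ∂μ = 0 ∧ ∫ ω, |X ω - g (X ω)| ∂μ ≤ ε := by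
  have hXm : AEMeasurable X μ := hX.aemeasurable
  have := Measure.isProbabilityMeasure_map hXm
  obtain ⟨g, hg, hg_int⟩ := Integrable.exists_boundedContinuous_integral_sub_le
    (μ := μ.map X) (f := id) ((integrable_map_measure (by fun_prop) hXm).2 hX) (half_pos hε)
  have hgX : Integrable (fun ω => g (X ω)) μ := hg_int.comp_aemeasurable hXm
  have hdist_int : Integrable (fun ω => |X ω - g (X ω)|) μ := (hX.sub hgX).abs
  have hdist : ∫ ω, |X ω - g (X ω)| ∂μ ≤ ε / 2 := by
    rwa [integral_map hXm (by fun_prop)] at hg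
  set c := ∫ ω, g (X ω) ∂μ
  have hc_le : |c| ≤ ε / 2 := by
    have hc_eq : c = -∫ ω, (X ω - g (X ω)) ∂μ := by
      rw [integral_sub hX hgX, hmean, zero_sub, neg_neg]
    rw [hc_eq, abs_neg]
    exact abs_integral_le_integral_abs.trans hdist
  refine ⟨g - BoundedContinuousFunction.const ℝ c, ?_, ?_⟩
  · change ∫ ω, (g (X ω) - c) ∂μ = 0
    rw [integral_sub hgX (integrable_const c), integral_const, probReal_univ, one_smul, sub_self]
  · calc ∫ ω, |X ω - (g (X ω) - c)| ∂μ ≤ ∫ ω, (|X ω - g (X ω)| + |c|) ∂μ := by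
          refine integral_mono_of_nonneg (Eventually.of_forall fun _ => abs_nonneg _)
            (hdist_int.add (integrable_const _)) (Eventually.of_forall fun ω => ?_)
          simpa only [sub_sub_eq_add_sub, add_sub_right_comm] using abs_add_le (X ω - g (X ω)) c
      _ = ∫ ω, |X ω - g (X ω)| ∂μ + |c| := by
          rw [integral_add hdist_int (integrable_const _), integral_const, probReal_univ, one_smul]
      _ ≤ ε := by linarith

/-- The increments are split as `g ∘ ξ + (ξ - g ∘ ξ)` with `g ∘ ξ` bounded and centred: the first
part is handled in `L²`, the second is uniformly small in `L¹`. -/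
theorem tendsto_integral_abs_martingaleTransform (hH : ∀ k, Measurable[ℱ k] (H k))
    (hH_le : ∀ k ω, |H k ω| ≤ 1) (hξ : ∀ k, Measurable[ℱ (k + 1)] (ξ k))
    (hindep : ∀ k, Indep (MeasurableSpace.comap (ξ k) inferInstance) (ℱ k) μ)
    (hident : ∀ k, IdentDistrib (ξ k) (ξ 0) μ μ) (hint : Integrable (ξ 0) μ)
    (hmean : ∫ ω, ξ 0 ω ∂μ = 0) :
    Tendsto (fun n : ℕ => (n : ℝ)⁻¹ * ∫ ω, |martingaleTransform H ξ n ω| ∂μ) atTop (𝓝 0) := by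
  rw [tendsto_order]
  refine ⟨fun a ha => Eventually.of_forall fun n => ha.trans_le (by positivity), fun ε hε => ?_⟩
  obtain ⟨g, hg_mean, hg_dist⟩ :=
    exists_boundedContinuous_comp_integral_eq_zero hint hmean (half_pos hε)
  have hgm : Measurable g := g.continuous.measurable
  set ζ : ℕ → Ω → ℝ := fun k ω => g (ξ k ω)
  have hζ : ∀ k, Measurable[ℱ (k + 1)] (ζ k) := fun k => hgm.comp (hξ k)
  have hHm : ∀ k, Measurable (H k) := fun k => (hH k).mono (ℱ.le k) le_rfl
  have hζ_L2 : ∀ k, MemLp (ζ k) 2 μ := fun k =>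
    MemLp.of_bound ((hζ k).mono (ℱ.le _) le_rfl).aestronglyMeasurable ‖g‖
      (Eventually.of_forall fun ω => g.norm_coe_le_norm _)
  have hζ_indep : ∀ k, Indep (MeasurableSpace.comap (ζ k) inferInstance) (ℱ k) μ := fun k =>
    indep_of_indep_of_le_left (hindep k) (hgm.comp (comap_measurable (ξ k))).comap_le
  have hζ_tendsto := tendsto_integral_abs_martingaleTransform_of_memLp_two (V := ∫ ω, ζ 0 ω ^ 2 ∂μ)
    hH hH_le hζ hζ_L2 hζ_indep (fun k => ((hident k).comp hgm).integral_eq.trans hg_mean)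
    (fun k => ((hident k).comp (hgm.pow_const 2)).integral_eq.le)
  have hrest_int : ∀ k, Integrable ((ξ - ζ) k) μ := fun k =>
    ((hident k).integrable_iff.2 hint).sub ((hζ_L2 k).integrable one_le_two)
  have hrest : ∀ n : ℕ, ∫ ω, |martingaleTransform H (ξ - ζ) n ω| ∂μ ≤ n * (ε / 2) :=
    integral_abs_martingaleTransform_le hH_le hrest_int fun k =>
      ((hident k).comp (measurable_id.sub hgm).abs).integral_eq.trans_le hg_dist
  filter_upwards [hζ_tendsto.eventually_lt_const (half_pos hε), eventually_gt_atTop 0]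
    with n hn hn_pos
  calc (n : ℝ)⁻¹ * ∫ ω, |martingaleTransform H ξ n ω| ∂μ
      ≤ (n : ℝ)⁻¹ * (∫ ω, |martingaleTransform H ζ n ω| ∂μ +
          ∫ ω, |martingaleTransform H (ξ - ζ) n ω| ∂μ) := by
        gcongr
        rw [← add_sub_cancel ζ ξ, add_sub_cancel_left]
        exact integral_abs_martingaleTransform_add_le hHm hH_le
          (fun k => (hζ_L2 k).integrable one_le_two) hrest_int n
    _ ≤ (n : ℝ)⁻¹ * ∫ ω, |martingaleTransform H ζ n ω| ∂μ + ε / 2 := by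
        rw [mul_add]
        gcongr
        exact (inv_mul_le_iff₀ (Nat.cast_pos.2 hn_pos)).2 (hrest n)
    _ < ε := by linarith

end MartingaleTransform

section SignedSums

variable {Ω X : Type*} {mΩ : MeasurableSpace Ω} [mX : MeasurableSpace X] {μ : Measure Ω}
  {Z : ℕ → Ω → X}

/-- The filtration generated by a process, with time `k` meaning strictly before `Z k`: its `k`-th
σ-algebra is generated by `Z 0, …, Z (k - 1)`, which makes partial products predictable. -/
def strictPast (Z : ℕ → Ω → X) (hZ : ∀ k, Measurable (Z k)) : Filtration ℕ mΩ where
  seq k := ⨆ j ∈ Set.Iio k, mX.comap (Z j)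
  mono' _ _ hkl := biSup_mono fun _ hj => lt_of_lt_of_le hj hkl
  le' _ := iSup₂_le fun j _ => (hZ j).comap_le

theorem measurable_strictPast (hZ : ∀ k, Measurable (Z k)) {j k : ℕ} (hjk : j < k) :
    Measurable[strictPast Z hZ k] (Z j) :=
  (comap_measurable (Z j)).mono (le_biSup (fun j => mX.comap (Z j)) hjk) le_rfl

theorem indep_comap_strictPast (hZ : ∀ k, Measurable (Z k)) (hindep : iIndepFun Z μ) (k : ℕ) :
    Indep (mX.comap (Z k)) (strictPast Z hZ k) μ := by
  have hdisj : Disjoint {k} (Set.Iio k) := Set.disjoint_singleton_left.2 (lt_irrefl k)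
  have hsup := indep_iSup_of_disjoint (fun j => (hZ j).comap_le) hindep.iIndep hdisj
  rwa [iSup_singleton] at hsup

/-- The running product of a process, in the role of the sign accumulated by a matrix product. -/
def runningProd (σ : ℕ → Ω → ℝ) (k : ℕ) (ω : Ω) : ℝ :=
  ∏ j ∈ Finset.range k, σ j ω

theorem abs_runningProd_le_one {σ : ℕ → Ω → ℝ} (hσ : ∀ k ω, |σ k ω| ≤ 1) (k : ℕ) (ω : Ω) :
    |runningProd σ k ω| ≤ 1 := by
  rw [runningProd, Finset.abs_prod]
  exact Finset.prod_le_one (fun _ _ => abs_nonneg _) fun j _ => hσ j ω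

theorem martingaleTransform_runningProd_mul_sub_one (σ : ℕ → Ω → ℝ) (c : ℝ) (n : ℕ) (ω : Ω) :
    martingaleTransform (runningProd σ) (fun k ω => c * (σ k ω - 1)) n ω =
      c * (runningProd σ n ω - 1) := by
  induction n with
  | zero => simp [martingaleTransform, runningProd]
  | succ n ih =>
    rw [martingaleTransform_succ, ih, runningProd, runningProd, Finset.prod_range_succ]
    ring

variable [IsProbabilityMeasure μ]

theorem integral_abs_martingaleTransform_runningProd_mul_sub_one_le {σ : ℕ → Ω → ℝ}
    (hσ : ∀ k ω, |σ k ω| ≤ 1) (c : ℝ) (n : ℕ) :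
    ∫ ω, |martingaleTransform (runningProd σ) (fun k ω => c * (σ k ω - 1)) n ω| ∂μ ≤ 2 * |c| := by
  calc ∫ ω, |martingaleTransform (runningProd σ) (fun k ω => c * (σ k ω - 1)) n ω| ∂μ
      ≤ ∫ _ω, 2 * |c| ∂μ := by
        refine integral_mono_of_nonneg (Eventually.of_forall fun _ => abs_nonneg _)
          (integrable_const _) (Eventually.of_forall fun ω => ?_)
        have hT : |runningProd σ n ω - 1| ≤ 2 := by
          have hT_le := abs_le.1 (abs_runningProd_le_one hσ n ω)
          exact abs_le.2 ⟨by linarith, by linarith⟩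
        simp only [martingaleTransform_runningProd_mul_sub_one, abs_mul, mul_comm |c|]
        gcongr
    _ = 2 * |c| := by rw [integral_const, probReal_univ, one_smul]

variable {q : Measure X}

theorem tendsto_integral_abs_martingaleTransform_comp {H : ℕ → Ω → ℝ} {f : X → ℝ}
    (hZ : ∀ k, MeasurePreserving (Z k) μ q) (hindep : iIndepFun Z μ)
    (hH : ∀ k, Measurable[strictPast Z (fun k => (hZ k).measurable) k] (H k))
    (hH_le : ∀ k ω, |H k ω| ≤ 1) (hf : Measurable f) (hf_int : Integrable f q)
    (hf_mean : ∫ x, f x ∂q = 0) :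
    Tendsto (fun n : ℕ => (n : ℝ)⁻¹ * ∫ ω, |martingaleTransform H (fun k ω => f (Z k ω)) n ω| ∂μ)
      atTop (𝓝 0) := by
  have hZm : ∀ k, Measurable (Z k) := fun k => (hZ k).measurable
  have hident : ∀ k, IdentDistrib (Z k) (Z 0) μ μ := fun k =>
    ⟨(hZm k).aemeasurable, (hZm 0).aemeasurable, (hZ k).map_eq.trans (hZ 0).map_eq.symm⟩
  refine tendsto_integral_abs_martingaleTransform hH hH_le
    (fun k => hf.comp (measurable_strictPast hZm k.lt_succ_self))
    (fun k => indep_of_indep_of_le_left (indep_comap_strictPast hZm hindep k)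
      (hf.comp (comap_measurable (Z k))).comap_le)
    (fun k => (hident k).comp hf) ((hZ 0).integrable_comp_of_integrable hf_int) ?_
  rwa [← (hZ 0).map_eq, integral_map (hZ 0).aemeasurable hf.aestronglyMeasurable] at hf_mean

theorem exists_integral_add_const_mul_eq_zero {f g : X → ℝ} (hf : Integrable f q)
    (hg : Integrable g q) (hg_ne : ∫ x, g x ∂q ≠ 0) : ∃ c : ℝ, ∫ x, (f x + c * g x) ∂q = 0 := by
  refine ⟨-(∫ x, f x ∂q) / ∫ x, g x ∂q, ?_⟩
  rw [integral_add hf (hg.const_mul _), integral_const_mul, div_mul_cancel₀ _ hg_ne,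
    add_neg_cancel]

/-- Adding to `a` the multiple of the coboundary `s - 1` that makes it centred changes the sums only
by a bounded amount. -/
theorem tendsto_integral_abs_martingaleTransform_runningProd [IsProbabilityMeasure q]
    {s a : X → ℝ} (hZ : ∀ k, MeasurePreserving (Z k) μ q) (hindep : iIndepFun Z μ)
    (hs : Measurable s) (hs_le : ∀ x, |s x| ≤ 1) (hs_mean : ∫ x, s x ∂q ≠ 1)
    (ha : Measurable a) (ha_int : Integrable a q) :
    Tendsto (fun n : ℕ => (n : ℝ)⁻¹ * ∫ ω, |martingaleTransform
      (runningProd fun k ω => s (Z k ω)) (fun k ω => a (Z k ω)) n ω| ∂μ) atTop (𝓝 0) := by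
  have hZm : ∀ k, Measurable (Z k) := fun k => (hZ k).measurable
  set T := runningProd fun k ω => s (Z k ω)
  have hT_le : ∀ k ω, |T k ω| ≤ 1 := abs_runningProd_le_one fun k ω => hs_le (Z k ω)
  have hT : ∀ k, Measurable[strictPast Z hZm k] (T k) := fun k =>
    Finset.measurable_prod _ fun j hj =>
      hs.comp (measurable_strictPast hZm (Finset.mem_range.1 hj))
  have hs_int : Integrable s q :=
    Integrable.of_bound hs.aestronglyMeasurable 1 (Eventually.of_forall hs_le)
  have hs_sub_int : Integrable (fun x => s x - 1) q := hs_int.sub (integrable_const 1)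
  obtain ⟨c, hc⟩ := exists_integral_add_const_mul_eq_zero ha_int hs_sub_int <| by
    rwa [integral_sub hs_int (integrable_const 1), integral_const, probReal_univ, one_smul,
      sub_ne_zero]
  set f : X → ℝ := fun x => a x + c * (s x - 1)
  have hf : Measurable f := ha.add ((hs.sub_const 1).const_mul c)
  have hf_int : Integrable f q := ha_int.add (hs_sub_int.const_mul c)
  have hbound : Tendsto (fun n : ℕ => (n : ℝ)⁻¹ * ∫ ω, |martingaleTransform T
      (fun k ω => f (Z k ω)) n ω| ∂μ + (n : ℝ)⁻¹ * (2 * |-c|)) atTop (𝓝 0) := by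
    simpa only [zero_mul, add_zero] using
      (tendsto_integral_abs_martingaleTransform_comp hZ hindep hT hT_le hf hf_int hc).add
        ((tendsto_inv_atTop_nhds_zero_nat (𝕜 := ℝ)).mul_const (2 * |-c|))
  have hsplit : (fun k ω => a (Z k ω)) =
      (fun k ω => f (Z k ω)) + fun k ω => -c * (s (Z k ω) - 1) := by
    funext k ω
    simp only [f, Pi.add_apply]
    ring
  refine squeeze_zero (fun n => by positivity) (fun n => ?_) hbound
  rw [← mul_add, hsplit]
  gcongr
  refine (integral_abs_martingaleTransform_add_le
    (fun k => (hT k).mono ((strictPast Z hZm).le k) le_rfl) hT_le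
    (fun k => (hZ k).integrable_comp_of_integrable hf_int)
    (fun k => (hZ k).integrable_comp_of_integrable (hs_sub_int.const_mul (-c))) n).trans
    (add_le_add le_rfl ?_)
  exact integral_abs_martingaleTransform_runningProd_mul_sub_one_le
    (fun k ω => hs_le (Z k ω)) (-c) n

end SignedSums

theorem lyapSeq_eq_integral_infinitePi {X G : Type*} [MeasurableSpace X] [Monoid G]
    (B : X → G) (nrm : G → ℝ) (q : Measure X) [IsProbabilityMeasure q] (n : ℕ)
    (hB : Measurable fun ω : Fin n → X =>
      Real.log (nrm (List.ofFn fun i => B (ω i)).reverse.prod)) :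
    lyapSeq B nrm q n = (n : ℝ)⁻¹ * ∫ ω : ℕ → X,
      Real.log (nrm ((List.range n).map fun k => B (ω k)).reverse.prod)
        ∂(Measure.infinitePi fun _ => q) := by
  have hmap : (Measure.infinitePi fun _ : ℕ => q).map (fun ω (i : Fin n) => ω i) =
      Measure.pi fun _ => q := by
    rw [Measure.map_infinitePi_infinitePi_of_inj Fin.val_injective, Measure.infinitePi_eq_pi]
  have hmeas : Measurable fun (ω : ℕ → X) (i : Fin n) => ω i := by fun_prop
  rw [lyapSeq, ← hmap, integral_map hmeas.aemeasurable hB.aestronglyMeasurable]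
  simp only [List.ofFn_eq_map, ← List.map_coe_finRange_eq_range, List.map_map, Function.comp_def]

section AxisPermutations

instance : BorelSpace SL2 := ⟨rfl⟩

theorem secondCountableTopology_SL2 : SecondCountableTopology SL2 :=
  have : SecondCountableTopology (Matrix (Fin 2) (Fin 2) ℝ) :=
    inferInstanceAs (SecondCountableTopology (Fin 2 → Fin 2 → ℝ))
  TopologicalSpace.secondCountableTopology_induced _ _ _

-- Only local: globally it would change the `SigmaFinite` instance synthesized in `lyapPlus q`.
attribute [local instance] secondCountableTopology_SL2

instance : ContinuousMul SL2 := Matrix.SpecialLinearGroup.topologicalGroup.toContinuousMul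

theorem continuous_coe_SL2 : Continuous fun α : SL2 => (α : Matrix (Fin 2) (Fin 2) ℝ) :=
  continuous_induced_dom

theorem continuous_entry (i j : Fin 2) :
    Continuous fun α : SL2 => (α : Matrix (Fin 2) (Fin 2) ℝ) i j :=
  continuous_coe_SL2.matrix_elem i j

open scoped Matrix.Norms.L2Operator in
theorem continuous_opNorm : Continuous opNorm :=
  continuous_norm (E := Matrix (Fin 2) (Fin 2) ℝ)

theorem measurable_log_opNorm_prod (n : ℕ) : Measurable fun ω : Fin n → SL2 =>
    Real.log (opNorm ((List.ofFn fun i => id (ω i)).reverse.prod : SL2)) := by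
  have hprod : Measurable fun ω : Fin n → SL2 => (List.ofFn fun i => id (ω i)).reverse.prod := by
    simp only [List.ofFn_eq_map, ← List.map_reverse]
    exact (continuous_list_prod _ fun i _ => continuous_apply i).measurable
  exact Real.measurable_log.comp
    ((continuous_opNorm.comp continuous_coe_SL2).measurable.comp hprod)

theorem msupport_eq_support (q : Measure SL2) : msupport q = q.support := by
  rw [Measure.support_eq_forall_isOpen]
  ext α
  exact forall_congr' fun U => forall_comm.trans <| by simp only [pos_iff_ne_zero]

theorem ae_mem_msupport (q : Measure SL2) : ∀ᵐ α ∂q, α ∈ msupport q := by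
  rw [msupport_eq_support]
  exact Measure.support_mem_ae

/-- The matrices permuting the two coordinate axes. -/
def PermutesAxes (α : SL2) : Prop :=
  (mapLine α Hax = Hax ∧ mapLine α Vax = Vax) ∨ (mapLine α Hax = Vax ∧ mapLine α Vax = Hax)

theorem mapLine_one (L : Submodule ℝ (Fin 2 → ℝ)) : mapLine 1 L = L := by
  simp [mapLine]

theorem mapLine_mul (α β : SL2) (L : Submodule ℝ (Fin 2 → ℝ)) :
    mapLine (α * β) L = mapLine α (mapLine β L) := by
  simp [mapLine, Matrix.toLin'_mul, Submodule.map_comp]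

theorem PermutesAxes.one : PermutesAxes 1 := Or.inl ⟨mapLine_one _, mapLine_one _⟩

theorem PermutesAxes.mul {α β : SL2} (hα : PermutesAxes α) (hβ : PermutesAxes β) :
    PermutesAxes (α * β) := by
  unfold PermutesAxes
  simp only [mapLine_mul]
  rcases hα with hα | hα <;> rcases hβ with hβ | hβ <;>
    simp only [hα, hβ, and_self, true_or, or_true]

theorem mem_Hax {x y : ℝ} : ![x, y] ∈ Hax ↔ y = 0 := by
  simp [Hax, Submodule.mem_span_singleton, eq_comm]

theorem mem_Vax {x y : ℝ} : ![x, y] ∈ Vax ↔ x = 0 := by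
  simp [Vax, Submodule.mem_span_singleton, eq_comm]

theorem col_zero_mem_mapLine_Hax (α : SL2) : ![α 0 0, α 1 0] ∈ mapLine α Hax := by
  refine ⟨![1, 0], mem_Hax.2 rfl, ?_⟩
  ext i; fin_cases i <;> simp [Matrix.mulVec, dotProduct]

theorem col_one_mem_mapLine_Vax (α : SL2) : ![α 0 1, α 1 1] ∈ mapLine α Vax := by
  refine ⟨![0, 1], mem_Vax.2 rfl, ?_⟩
  ext i; fin_cases i <;> simp [Matrix.mulVec, dotProduct]

theorem PermutesAxes.exists_eq {α : SL2} (hα : PermutesAxes α) :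
    ∃ x : ℝ, x ≠ 0 ∧ ((α : Matrix (Fin 2) (Fin 2) ℝ) = !![x, 0; 0, x⁻¹] ∨
      (α : Matrix (Fin 2) (Fin 2) ℝ) = !![0, -x⁻¹; x, 0]) := by
  have hdet : α 0 0 * α 1 1 - α 0 1 * α 1 0 = 1 := (Matrix.det_fin_two _).symm.trans α.det_coe
  have hH := col_zero_mem_mapLine_Hax α
  have hV := col_one_mem_mapLine_Vax α
  have hα_eta := Matrix.eta_fin_two (α : Matrix (Fin 2) (Fin 2) ℝ)
  rcases hα with ⟨hHax, hVax⟩ | ⟨hHax, hVax⟩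
  · have h10 : α 1 0 = 0 := mem_Hax.1 (hHax ▸ hH)
    have h01 : α 0 1 = 0 := mem_Vax.1 (hVax ▸ hV)
    rw [h10, mul_zero, sub_zero] at hdet
    rw [h10, h01, eq_inv_of_mul_eq_one_right hdet] at hα_eta
    exact ⟨α 0 0, left_ne_zero_of_mul_eq_one hdet, Or.inl hα_eta⟩
  · have h00 : α 0 0 = 0 := mem_Vax.1 (hHax ▸ hH)
    have h11 : α 1 1 = 0 := mem_Hax.1 (hVax ▸ hV)
    rw [h00, zero_mul, zero_sub, ← neg_mul] at hdet
    rw [h00, h11, neg_eq_iff_eq_neg.1 (eq_inv_of_mul_eq_one_left hdet)] at hα_eta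
    exact ⟨α 1 0, right_ne_zero_of_mul_eq_one hdet, Or.inr hα_eta⟩

theorem PermutesAxes.mapLine_Hax_eq {α : SL2} (hα : PermutesAxes α) (h10 : α 1 0 = 0) :
    mapLine α Hax = Hax := by
  refine hα.elim And.left fun ⟨hHax, _⟩ => absurd ?_ (one_ne_zero (α := ℝ))
  have hcol := col_zero_mem_mapLine_Hax α
  have h00 : α 0 0 = 0 := mem_Vax.1 (hHax ▸ hcol)
  rw [← α.det_coe, Matrix.det_fin_two, h00, h10, zero_mul, mul_zero, sub_zero]

theorem finrank_Hax : Module.finrank ℝ Hax = 1 :=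
  finrank_span_singleton fun h => one_ne_zero (congrFun h 0)

/-- `-1` if the matrix swaps the axes and `1` if it fixes them; the definition by the lower left
entry is meant for matrices permuting the axes only. -/
def swapSign (α : SL2) : ℝ := if α 1 0 = 0 then 1 else -1

/-- The logarithm of the factor by which a matrix permuting the axes stretches the horizontal axis.
For such a matrix one of the two summands is zero. -/
def logStretch (α : SL2) : ℝ := Real.log (|α 0 0| + |α 1 0|)

theorem swapSign_one : swapSign 1 = 1 := by simp [swapSign]

theorem logStretch_one : logStretch 1 = 0 := by simp [logStretch]

theorem swapSign_mul {α β : SL2} (hα : PermutesAxes α) (hβ : PermutesAxes β) :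
    swapSign (α * β) = swapSign α * swapSign β := by
  obtain ⟨x, hx, hα | hα⟩ := hα.exists_eq <;> obtain ⟨y, hy, hβ | hβ⟩ := hβ.exists_eq <;>
    simp [swapSign, hα, hβ, hx, hy]

theorem logStretch_mul {α β : SL2} (hα : PermutesAxes α) (hβ : PermutesAxes β) :
    logStretch (α * β) = logStretch β + swapSign β * logStretch α := by
  obtain ⟨x, hx, hα | hα⟩ := hα.exists_eq <;> obtain ⟨y, hy, hβ | hβ⟩ := hβ.exists_eq <;>
    simp [swapSign, logStretch, hα, hβ, hx, hy, abs_mul, Real.log_mul, add_comm]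

open scoped Matrix.Norms.L2Operator in
theorem opNorm_mul_self (A : Matrix (Fin 2) (Fin 2) ℝ) : opNorm A * opNorm A = opNorm (Aᵀ * A) :=
  (Matrix.l2_opNorm_conjTranspose_mul_self A).symm

open scoped Matrix.Norms.L2Operator in
theorem opNorm_diagonal (v : Fin 2 → ℝ) : opNorm (diagonal v) = ‖v‖ :=
  Matrix.l2_opNorm_diagonal v

theorem PermutesAxes.exists_transpose_mul_self_eq {α : SL2} (hα : PermutesAxes α) :
    ((α : Matrix (Fin 2) (Fin 2) ℝ)ᵀ * α) =
      diagonal ![Real.exp (2 * logStretch α), Real.exp (-(2 * logStretch α))] := by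
  have hexp : ∀ x : ℝ, x ≠ 0 → Real.exp (2 * Real.log x) = x * x := fun x hx => by
    rw [two_mul, Real.exp_add, Real.exp_log_eq_abs hx, abs_mul_abs_self]
  obtain ⟨x, hx, hα | hα⟩ := hα.exists_eq <;> ext i j <;> fin_cases i <;> fin_cases j <;>
    simp [hα, logStretch, Matrix.mul_apply, Real.exp_neg, hexp x hx]

theorem norm_vec_exp_exp_neg (t : ℝ) : ‖![Real.exp t, Real.exp (-t)]‖ = Real.exp |t| := by
  rw [abs_eq_max_neg, Real.exp_monotone.map_max]
  simp [Pi.norm_def, Fin.univ_succ]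

theorem PermutesAxes.opNorm_eq {α : SL2} (hα : PermutesAxes α) :
    opNorm (α : Matrix (Fin 2) (Fin 2) ℝ) = Real.exp |logStretch α| := by
  refine (mul_self_inj (norm_nonneg _) (Real.exp_pos _).le).1 ?_
  calc opNorm (α : Matrix (Fin 2) (Fin 2) ℝ) * opNorm (α : Matrix (Fin 2) (Fin 2) ℝ)
      = Real.exp |2 * logStretch α| := by
        rw [opNorm_mul_self, hα.exists_transpose_mul_self_eq, opNorm_diagonal,
          norm_vec_exp_exp_neg]
    _ = Real.exp |logStretch α| * Real.exp |logStretch α| := by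
        rw [← Real.exp_add, abs_mul, abs_two, two_mul]

theorem PermutesAxes.log_opNorm {α : SL2} (hα : PermutesAxes α) :
    Real.log (opNorm (α : Matrix (Fin 2) (Fin 2) ℝ)) = |logStretch α| := by
  rw [hα.opNorm_eq, Real.log_exp]

theorem abs_swapSign_le_one (α : SL2) : |swapSign α| ≤ 1 := by
  unfold swapSign
  split_ifs <;> simp

theorem measurable_swapSign : Measurable swapSign :=
  Measurable.ite ((continuous_entry 1 0).measurable (measurableSet_singleton 0))
    measurable_const measurable_const

theorem measurable_logStretch : Measurable logStretch :=
  Real.measurable_log.comp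
    ((continuous_entry 0 0).abs.add (continuous_entry 1 0).abs).measurable

theorem exists_mem_msupport_lower_left_ne_zero {q : Measure SL2}
    (haxes : ∀ α ∈ msupport q, PermutesAxes α)
    (hirr : ¬ ∃ L : Submodule ℝ (Fin 2 → ℝ), Module.finrank ℝ L = 1 ∧
      ∀ α ∈ msupport q, mapLine α L = L) :
    ∃ α ∈ msupport q, α 1 0 ≠ 0 := by
  contrapose! hirr
  exact ⟨Hax, finrank_Hax, fun α hα => (haxes α hα).mapLine_Hax_eq (hirr α hα)⟩

theorem integral_swapSign_ne_one {q : Measure SL2} [IsProbabilityMeasure q]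
    (hswap : ∃ α ∈ msupport q, α 1 0 ≠ 0) : ∫ α, swapSign α ∂q ≠ 1 := by
  obtain ⟨α, hα, h10⟩ := hswap
  intro hint
  have hae : swapSign =ᵐ[q] fun _ => 1 := by
    refine (integral_eq_iff_of_ae_le ?_ (integrable_const 1) ?_).1 ?_
    · exact Integrable.of_bound measurable_swapSign.aestronglyMeasurable 1
        (Eventually.of_forall abs_swapSign_le_one)
    · exact Eventually.of_forall fun α => le_of_abs_le (abs_swapSign_le_one α)
    · rw [hint, integral_const, probReal_univ, one_smul]
  refine hα {β : SL2 | β 1 0 ≠ 0} (isOpen_ne_fun (continuous_entry 1 0) continuous_const) h10 ?_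
  refine measure_mono_null (fun β hβ => ?_) (ae_iff.1 hae)
  have hβ : β 1 0 ≠ 0 := hβ
  change swapSign β ≠ 1
  norm_num [swapSign, hβ]

theorem integrable_logStretch {q : Measure SL2}
    (hlog : ∫⁻ α, ENNReal.ofReal (Real.log (opNorm (α : Matrix (Fin 2) (Fin 2) ℝ))) ∂q < ⊤)
    (haxes : ∀ᵐ α ∂q, PermutesAxes α) : Integrable logStretch q := by
  refine ⟨measurable_logStretch.aestronglyMeasurable, ?_⟩
  rw [HasFiniteIntegral]
  refine (lintegral_congr_ae ?_).trans_lt hlog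
  filter_upwards [haxes] with α hα
  rw [hα.log_opNorm, Real.enorm_eq_ofReal_abs]

theorem prod_map_range_succ_reverse {M : Type*} [Monoid M] (g : ℕ → M) (n : ℕ) :
    ((List.range (n + 1)).map g).reverse.prod = g n * ((List.range n).map g).reverse.prod := by
  simp [List.range_succ]

section Products

variable {g : ℕ → SL2} (hg : ∀ k, PermutesAxes (g k))
include hg

theorem permutesAxes_prod (n : ℕ) : PermutesAxes ((List.range n).map g).reverse.prod :=
  List.prod_induction _ (fun _ _ => PermutesAxes.mul) PermutesAxes.one <| by simp [hg]

theorem swapSign_prod (n : ℕ) :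
    swapSign ((List.range n).map g).reverse.prod = ∏ k ∈ Finset.range n, swapSign (g k) := by
  induction n with
  | zero => exact swapSign_one
  | succ n ih =>
    rw [prod_map_range_succ_reverse, swapSign_mul (hg n) (permutesAxes_prod hg n), ih,
      Finset.prod_range_succ, mul_comm]

theorem logStretch_prod (n : ℕ) :
    logStretch ((List.range n).map g).reverse.prod =
      ∑ k ∈ Finset.range n, (∏ j ∈ Finset.range k, swapSign (g j)) * logStretch (g k) := by
  induction n with
  | zero => exact logStretch_one
  | succ n ih =>
    rw [prod_map_range_succ_reverse, logStretch_mul (hg n) (permutesAxes_prod hg n), ih,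
      swapSign_prod hg, Finset.sum_range_succ]

end Products

theorem lyapSeq_eq_integral_abs_martingaleTransform {q : Measure SL2} [IsProbabilityMeasure q]
    (haxes : ∀ᵐ α ∂q, PermutesAxes α) (n : ℕ) :
    lyapSeq id (fun α : SL2 => opNorm (α : Matrix (Fin 2) (Fin 2) ℝ)) q n =
      (n : ℝ)⁻¹ * ∫ ω : ℕ → SL2, |martingaleTransform (runningProd fun k ω => swapSign (ω k))
        (fun k ω => logStretch (ω k)) n ω| ∂(Measure.infinitePi fun _ => q) := by
  rw [lyapSeq_eq_integral_infinitePi _ _ _ _ (measurable_log_opNorm_prod n)]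
  congr 1
  have hall : ∀ᵐ ω : ℕ → SL2 ∂(Measure.infinitePi fun _ => q), ∀ k, PermutesAxes (ω k) :=
    ae_all_iff.2 fun k =>
      (measurePreserving_eval_infinitePi (fun _ => q) k).quasiMeasurePreserving.ae haxes
  refine integral_congr_ae ?_
  filter_upwards [hall] with ω hω
  exact (permutesAxes_prod hω n).log_opNorm.trans (congrArg _ (logStretch_prod hω n))

end AxisPermutations

/-- **Vanishing of `λ₊` for irreducible measures preserving the pair of axes.**
If every matrix in the support of `q` either preserves both coordinate axes or swaps
them, and `q` is irreducible (no line is invariant under every matrix of the support),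
then `λ₊(q) = 0`. -/
theorem lyapPlus_eq_zero_of_axes_invariant_irreducible
    (q : Measure SL2) [IsProbabilityMeasure q]
    (hlog : ∫⁻ α, ENNReal.ofReal (Real.log (opNorm (α : Matrix (Fin 2) (Fin 2) ℝ))) ∂q < ⊤)
    (haxes : ∀ α ∈ msupport q,
      (mapLine α Hax = Hax ∧ mapLine α Vax = Vax) ∨
      (mapLine α Hax = Vax ∧ mapLine α Vax = Hax))
    (hirr : ¬ ∃ L : Submodule ℝ (Fin 2 → ℝ), Module.finrank ℝ L = 1 ∧
      ∀ α ∈ msupport q, mapLine α L = L) :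
    lyapPlus q = 0 := by
  have hax : ∀ᵐ α ∂q, PermutesAxes α := (ae_mem_msupport q).mono haxes
  have hindep : iIndepFun (fun k (ω : ℕ → SL2) => ω k) (Measure.infinitePi fun _ => q) :=
    iIndepFun_infinitePi (X := fun _ => id) fun _ => measurable_id
  have hlim := tendsto_integral_abs_martingaleTransform_runningProd
    (fun k => measurePreserving_eval_infinitePi (fun _ => q) k) hindep
    measurable_swapSign abs_swapSign_le_one
    (integral_swapSign_ne_one (exists_mem_msupport_lower_left_ne_zero haxes hirr))
    measurable_logStretch (integrable_logStretch hlog hax)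
  exact (hlim.congr fun n => (lyapSeq_eq_integral_abs_martingaleTransform hax n).symm).limUnder_eq
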